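/- arXiv:2408.15181 — 3 statements merged into one kernel-verified Lean document; each statement's English description precedes it below -/
import Mathlib

section
/- An edge-labeling λ of a graph G is good if and only if every cycle of G admits at least two local minima with respect to λ, or at least two local maxima with respect to λ. -/
/-- A walk is *increasing* with respect to an edge-labeling if the sequence of labels of its
edges, traversed from the first endpoint to the last, is non-decreasing. -/
def IsIncreasing {V : Type*} (G : SimpleGraph V) (lab : Sym2 V → ℝ) {x y : V}
    (p : G.Walk x y) : Prop :=
  (p.edges.map lab).Chain' (· ≤ ·)

/-- An edge-labeling is *good* if for every ordered pair `(x, y)` of vertices there do not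
exist two distinct increasing paths from `x` to `y`. -/
def IsGoodLabeling {V : Type*} (G : SimpleGraph V) (lab : Sym2 V → ℝ) : Prop :=
  ∀ (x y : V) (p q : G.Walk x y), p.IsPath → q.IsPath →
    IsIncreasing G lab p → IsIncreasing G lab q → p = q

/-- The `i`-th entry (cyclically) of a list of real numbers. -/
noncomputable def cyc (l : List ℝ) (i : ℕ) : ℝ := l.getD (i % l.length) 0

/-- The cyclic list `l` of edge labels of a cycle has a *local minimum* starting at
position `i` and consisting of `k` consecutive edges: these `k` edges all carry the same
label, and the two edges of the cycle flanking this subpath carry strictly larger labels. -/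
def IsLocalMinAt (l : List ℝ) (i k : ℕ) : Prop :=
  i < l.length ∧ 1 ≤ k ∧ k < l.length ∧
  (∀ j < k, cyc l (i + j) = cyc l i) ∧
  cyc l i < cyc l (i + l.length - 1) ∧
  cyc l i < cyc l (i + k)

/-- Local maximum: as a local minimum, but the flanking edges carry strictly smaller labels. -/
def IsLocalMaxAt (l : List ℝ) (i k : ℕ) : Prop :=
  i < l.length ∧ 1 ≤ k ∧ k < l.length ∧
  (∀ j < k, cyc l (i + j) = cyc l i) ∧
  cyc l (i + l.length - 1) < cyc l i ∧
  cyc l (i + k) < cyc l i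

/-- The cyclic list of labels admits at least two (distinct) local minima. -/
def TwoLocalMinima (l : List ℝ) : Prop :=
  ∃ i₁ k₁ i₂ k₂, i₁ ≠ i₂ ∧ IsLocalMinAt l i₁ k₁ ∧ IsLocalMinAt l i₂ k₂

/-- The cyclic list of labels admits at least two (distinct) local maxima. -/
def TwoLocalMaxima (l : List ℝ) : Prop :=
  ∃ i₁ k₁ i₂ k₂, i₁ ≠ i₂ ∧ IsLocalMaxAt l i₁ k₁ ∧ IsLocalMaxAt l i₂ k₂

theorem cyc_of_lt {l : List ℝ} {i : ℕ} (h : i < l.length) : cyc l i = l[i] := by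
  simp [cyc, Nat.mod_eq_of_lt h, h]

theorem cyc_add_len (l : List ℝ) (i : ℕ) : cyc l (i + l.length) = cyc l i := by
  simp [cyc]

theorem cyc_add_mul (l : List ℝ) (i j : ℕ) : cyc l (i + l.length * j) = cyc l i := by
  simp [cyc]

theorem cyc_mod (l : List ℝ) (i : ℕ) : cyc l (i % l.length) = cyc l i := by
  simp [cyc]

theorem cyc_rotate (l : List ℝ) (hl : l ≠ []) (r i : ℕ) : cyc (l.rotate r) i = cyc l (i + r) := by
  have h : 0 < l.length := List.length_pos_iff.2 hl
  have h1 : i % l.length < (l.rotate r).length := by simpa using Nat.mod_lt _ h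
  have := cyc_of_lt h1
  rw [List.getElem_rotate] at this
  have h2 := cyc_of_lt (l := l) (Nat.mod_lt (i % l.length + r) h)
  rw [← h2, cyc_mod] at this
  have e1 := cyc_mod (l.rotate r) i
  rw [List.length_rotate] at e1
  rw [← e1, this]
  simp [cyc]

theorem isLocalMinAt_rotate {l : List ℝ} {r i k : ℕ} (h : IsLocalMinAt (l.rotate r) i k) :
    IsLocalMinAt l ((i + r) % l.length) k := by
  obtain ⟨h1, h2, h3, h4, h5, h6⟩ := h
  rw [List.length_rotate] at h1 h3 h5
  have hl : l ≠ [] := by rintro rfl; simp at h1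
  have hn : 0 < l.length := by omega
  simp only [cyc_rotate l hl] at h4 h5 h6
  have key : ∀ j, cyc l ((i + r) % l.length + j) = cyc l (i + j + r) := by
    intro j
    rw [← cyc_mod, Nat.mod_add_mod, cyc_mod]; congr 1; omega
  refine ⟨Nat.mod_lt _ hn, h2, h3, ?_, ?_, ?_⟩
  · intro j hj
    rw [key, cyc_mod]; exact h4 j hj
  · rw [Nat.add_sub_assoc (by omega), key, cyc_mod]
    rw [Nat.add_sub_assoc (by omega)] at h5
    exact h5
  · rw [key, cyc_mod]; exact h6

theorem twoLocalMinima_rotate {l : List ℝ} {r : ℕ} (h : TwoLocalMinima (l.rotate r)) :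
    TwoLocalMinima l := by
  obtain ⟨i, k, i', k', hne, h1, h2⟩ := h
  refine ⟨_, k, _, k', ?_, isLocalMinAt_rotate h1, isLocalMinAt_rotate h2⟩
  intro he
  apply hne
  have a1 := h1.1
  have a2 := h2.1
  rw [List.length_rotate] at a1 a2
  have : i ≡ i' [MOD l.length] := Nat.ModEq.add_right_cancel' r he
  rwa [Nat.ModEq, Nat.mod_eq_of_lt a1, Nat.mod_eq_of_lt a2] at this

/-- First nondecreasing, then nonincreasing from position `s` on. -/
def Uni (l : List ℝ) (s : ℕ) : Prop :=
  (∀ i, i + 1 < s → cyc l i ≤ cyc l (i + 1)) ∧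
  (∀ i, s ≤ i → i + 1 < l.length → cyc l (i + 1) ≤ cyc l i)

theorem run_back (f : ℕ → ℝ) (t : ℕ) (ht : 1 ≤ t) (h0 : f t < f (t - 1)) :
    ∀ d, (∀ i, t ≤ i → i < t + d → f (i + 1) ≤ f i) →
      ∃ i, t ≤ i ∧ i ≤ t + d ∧ f i < f (i - 1) ∧ ∀ m, i ≤ m → m ≤ t + d → f m = f (t + d) := by
  intro d
  induction d with
  | zero =>
    intro _
    exact ⟨t, le_rfl, le_rfl, h0, fun m h1 h2 => by congr 1; omega⟩
  | succ d ih =>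
    intro h
    obtain ⟨i, h1, h2, h3, h4⟩ := ih (fun i hi hi' => h i hi (by omega))
    rcases (h (t + d) (by omega) (by omega)).lt_or_eq with hlt | heq
    · refine ⟨t + d + 1, by omega, by omega, by simpa using hlt, fun m a b => ?_⟩
      congr 1; omega
    · refine ⟨i, h1, by omega, h3, fun m a b => ?_⟩
      rcases Nat.lt_or_ge (t + d) m with c | c
      · congr 1; omega
      · rw [h4 m a c, ← heq]; rfl

theorem exists_uni_of_start {l : List ℝ} (hn : 3 ≤ l.length) (hmin : ∀ i, cyc l 0 ≤ cyc l i)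
    (hlast : cyc l 0 < cyc l (l.length - 1)) (h2 : ¬ TwoLocalMinima l) :
    ∃ s, 1 ≤ s ∧ s < l.length ∧ Uni l s := by
  classical
  by_cases hex : ∃ t, 1 ≤ t ∧ t < l.length ∧ cyc l t < cyc l (t - 1)
  · obtain ⟨ht1, ht2, ht3⟩ := Nat.find_spec hex
    have htm := fun m hm => Nat.find_min hex (m := m) hm
    generalize Nat.find hex = t at *
    refine ⟨t, ht1, ht2, ?_, ?_⟩
    · intro i hi
      have := htm (i + 1) hi
      by_contra hc
      exact this ⟨by omega, by omega, by simpa using hc⟩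
    · by_contra hc
      push Not at hc
      obtain ⟨hj1, hj2, hj3⟩ := Nat.find_spec hc
      have hjm := fun m hm => Nat.find_min hc (m := m) hm
      generalize Nat.find hc = j at *
      obtain ⟨d, rfl⟩ := Nat.exists_eq_add_of_le hj1
      obtain ⟨i, a1, a2, a3, a4⟩ := run_back (cyc l) t ht1 ht3 d (by
        intro i b1 b2
        by_contra hcon
        exact hjm i b2 ⟨b1, by omega, by simpa using hcon⟩)
      have hk : ∃ k, cyc l 0 < cyc l k := ⟨_, hlast⟩
      have hk1 := Nat.find_spec hk
      have hk2 : Nat.find hk ≤ l.length - 1 := Nat.find_min' hk hlast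
      have hkm := fun m hm => Nat.find_min hk (m := m) hm
      generalize Nat.find hk = k at *
      have hk0 : k ≠ 0 := by rintro rfl; exact lt_irrefl _ hk1
      apply h2
      refine ⟨0, k, i, t + d + 1 - i, by omega, ⟨by omega, by omega, by omega, ?_, ?_, ?_⟩,
        by omega, by omega, by omega, ?_, ?_, ?_⟩
      · intro j hj
        have := hkm j hj
        rw [zero_add]
        exact le_antisymm (not_lt.1 this) (hmin j)
      · simpa using hlast
      · simpa using hk1
      · intro j hj
        rw [a4 (i + j) (by omega) (by omega), a4 i (by omega) (by omega)]
      · rw [show i + l.length - 1 = i - 1 + l.length by omega, cyc_add_len]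
        exact a3
      · rw [show i + (t + d + 1 - i) = t + d + 1 by omega, a4 i (by omega) (by omega)]
        exact hj3
  · push Not at hex
    refine ⟨l.length - 1, by omega, by omega, fun i hi => ?_, fun i hi hi' => by omega⟩
    simpa using hex (i + 1) (by omega) (by omega)

theorem exists_uni {l : List ℝ} (hn : 3 ≤ l.length) (h2 : ¬ TwoLocalMinima l) :
    ∃ r s, 1 ≤ s ∧ s < l.length ∧ Uni (l.rotate r) s := by
  classical
  have hl : l ≠ [] := by rintro rfl; simp at hn
  obtain ⟨i0, -, hi0⟩ := Finset.exists_min_image (Finset.range l.length) (cyc l)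
    ⟨0, by simp; omega⟩
  have hmin : ∀ i, cyc l i0 ≤ cyc l i := fun i => by
    rw [← cyc_mod l i]
    exact hi0 _ (Finset.mem_range.2 (Nat.mod_lt _ (by omega)))
  by_cases hc : ∀ j, cyc l j = cyc l i0
  · refine ⟨0, 1, le_rfl, by omega, ?_⟩
    rw [List.rotate_zero]
    exact ⟨fun i hi => by rw [hc, hc (i + 1)], fun i hi _ => by rw [hc, hc i]⟩
  · push Not at hc
    obtain ⟨j, hj⟩ := hc
    have hd : ∃ d, cyc l (j + d) = cyc l i0 := by
      refine ⟨i0 + l.length * j - j, ?_⟩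
      have : j ≤ l.length * j := Nat.le_mul_of_pos_left _ (by omega)
      rw [show j + (i0 + l.length * j - j) = i0 + l.length * j by omega, cyc_add_mul]
    have hd1 := Nat.find_spec hd
    have hdm := fun m hm => Nat.find_min hd (m := m) hm
    generalize Nat.find hd = d at *
    have hd0 : d ≠ 0 := by rintro rfl; exact hj hd1
    have hlast : cyc l i0 < cyc l (j + d - 1) := by
      refine lt_of_le_of_ne (hmin _) fun he => hdm (d - 1) (by omega) ?_
      rw [he]; congr 1; omega
    have := exists_uni_of_start (l := l.rotate (j + d)) (by simpa using hn) ?_ ?_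
      (fun h => h2 (twoLocalMinima_rotate h))
    · obtain ⟨s, a, b, c⟩ := this
      exact ⟨_, s, a, by simpa using b, c⟩
    · intro i
      rw [cyc_rotate l hl, cyc_rotate l hl, zero_add, hd1]
      exact hmin _
    · rw [cyc_rotate l hl, cyc_rotate l hl, zero_add, hd1, List.length_rotate,
        show l.length - 1 + (j + d) = j + d - 1 + l.length by omega, cyc_add_len]
      exact hlast

theorem Uni.mono {l : List ℝ} {s : ℕ} (h : Uni l s) {i j : ℕ} (hij : i ≤ j) (hj : j < s) :
    cyc l i ≤ cyc l j := by
  induction j, hij using Nat.le_induction with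
  | base => exact le_rfl
  | succ j hij ih => exact (ih (by omega)).trans (h.1 j hj)

theorem Uni.anti {l : List ℝ} {s : ℕ} (h : Uni l s) {i j : ℕ} (hi : s ≤ i) (hij : i ≤ j)
    (hj : j < l.length) : cyc l j ≤ cyc l i := by
  induction j, hij using Nat.le_induction with
  | base => exact le_rfl
  | succ j hij ih => exact (h.2 j (by omega) hj).trans (ih (by omega))

theorem cyc_pred {l : List ℝ} {i : ℕ} (hi : 1 ≤ i) :
    cyc l (i + l.length - 1) = cyc l (i - 1) := by
  rw [show i + l.length - 1 = i - 1 + l.length by omega, cyc_add_len]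

/-- A local minimum at a position `i ≥ 1` of a unimodal list. -/
theorem Uni.min_pos {l : List ℝ} {s : ℕ} (h : Uni l s) {i k : ℕ}
    (hm : IsLocalMinAt l i k) (hi : 1 ≤ i) :
    s ≤ i ∧ cyc l i < cyc l (i - 1) ∧ (∀ j, i ≤ j → j < l.length → cyc l j = cyc l i) ∧
      cyc l i ≤ cyc l 0 := by
  obtain ⟨h1, h2, h3, h4, h5, h6⟩ := hm
  rw [cyc_pred hi] at h5
  have hs : s ≤ i := by
    by_contra hc
    exact absurd (h.mono (i := i - 1) (j := i) (by omega) (by omega)) (not_le.2 h5)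
  have hk : l.length ≤ i + k := by
    by_contra hc
    exact absurd (h.anti hs (j := i + k) (by omega) (by omega)) (not_le.2 h6)
  refine ⟨hs, h5, fun j a b => ?_, ?_⟩
  · have := h4 (j - i) (by omega)
    rwa [show i + (j - i) = j by omega] at this
  · rcases hk.lt_or_eq with c | c
    · have := h4 (l.length - i) (by omega)
      rw [show i + (l.length - i) = 0 + l.length by omega, cyc_add_len] at this
      exact this.ge
    · rw [← c, ← zero_add l.length, cyc_add_len] at h6
      exact h6.le

theorem Uni.not_two_min {l : List ℝ} {s : ℕ} (h : Uni l s) : ¬ TwoLocalMinima l := by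
  have key : ∀ i k i' k', i < i' → IsLocalMinAt l i k → IsLocalMinAt l i' k' → False := by
    intro i k i' k' hlt h1 h2
    obtain ⟨a1, a2, a3, a4⟩ := h.min_pos h2 (by omega)
    have hi' := h2.1
    rcases Nat.eq_zero_or_pos i with rfl | hi
    · have h5 := h1.2.2.2.2.1
      rw [zero_add, a3 (l.length - 1) (by omega) (by omega)] at h5
      exact absurd a4 (not_le.2 h5)
    · obtain ⟨b1, b2, b3, b4⟩ := h.min_pos h1 hi
      rw [b3 i' (by omega) hi', b3 (i' - 1) (by omega) (by omega)] at a2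
      exact lt_irrefl _ a2
  rintro ⟨i, k, i', k', hne, h1, h2⟩
  rcases Nat.lt_or_gt_of_ne hne with c | c
  · exact key _ _ _ _ c h1 h2
  · exact key _ _ _ _ c h2 h1

theorem Uni.not_two_max {l : List ℝ} {s : ℕ} (h : Uni l s) : ¬ TwoLocalMaxima l := by
  have key : ∀ i k i' k', i < i' → IsLocalMaxAt l i k → IsLocalMaxAt l i' k' → False := by
    intro i k i' k' hlt h1 h2
    obtain ⟨a1, a2, a3, a4, a5, a6⟩ := h1
    obtain ⟨b1, b2, b3, b4, b5, b6⟩ := h2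
    rw [cyc_pred (by omega)] at b5
    have hs : i' ≤ s := by
      by_contra hc
      exact absurd (h.anti (i := i' - 1) (j := i') (by omega) (by omega) b1) (not_le.2 b5)
    have hk : s ≤ i + k := by
      by_contra hc
      exact absurd (h.mono (i := i) (j := i + k) (by omega) (by omega)) (not_le.2 a6)
    have e1 := a4 (i' - 1 - i) (by omega)
    rw [show i + (i' - 1 - i) = i' - 1 by omega] at e1
    rcases Nat.lt_or_ge i' (i + k) with c | c
    · have e2 := a4 (i' - i) (by omega)
      rw [show i + (i' - i) = i' by omega] at e2
      linarith
    · rw [show i + k = i' by omega] at a6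
      linarith
  rintro ⟨i, k, i', k', hne, h1, h2⟩
  rcases Nat.lt_or_gt_of_ne hne with c | c
  · exact key _ _ _ _ c h1 h2
  · exact key _ _ _ _ c h2 h1

theorem uni_append {a b : List ℝ} (ha : a.IsChain (· ≤ ·)) (hb : b.IsChain (· ≥ ·)) :
    Uni (a ++ b) a.length := by
  rw [List.isChain_iff_getElem] at ha hb
  constructor
  · intro i hi
    rw [cyc_of_lt (by simp; omega), cyc_of_lt (by simp; omega), List.getElem_append_left (by omega),
      List.getElem_append_left hi]
    exact ha i hi
  · intro i hi hi'
    rw [cyc_of_lt hi', cyc_of_lt (show i < (a ++ b).length by omega), List.getElem_append_right hi,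
      List.getElem_append_right (by omega)]
    have := hb (i - a.length) (by simp at hi'; omega)
    simpa only [show i - a.length + 1 = i + 1 - a.length by omega] using this

theorem Uni.split {a b : List ℝ} (h : Uni (a ++ b) a.length) :
    a.IsChain (· ≤ ·) ∧ b.IsChain (· ≥ ·) := by
  rw [List.isChain_iff_getElem, List.isChain_iff_getElem]
  constructor
  · intro i hi
    have := h.1 i hi
    rwa [cyc_of_lt (by simp; omega), cyc_of_lt (by simp; omega),
      List.getElem_append_left (by omega), List.getElem_append_left hi] at this
  · intro i hi
    have := h.2 (a.length + i) (by omega) (by simp; omega)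
    rw [cyc_of_lt (by simp; omega), cyc_of_lt (by simp; omega),
      List.getElem_append_right (by omega), List.getElem_append_right (by omega)] at this
    simpa [Nat.add_assoc] using this

section Walks

variable {V : Type*} {G : SimpleGraph V}

open SimpleGraph

theorem exists_rotate (r : ℕ) : ∀ (v : V) (C : G.Walk v v), C.IsCycle →
    ∃ (w : V) (D : G.Walk w w), D.IsCycle ∧ D.edges = C.edges.rotate r := by
  induction r with
  | zero => exact fun v C hC => ⟨v, C, hC, by simp⟩
  | succ r ih =>
    intro v C hC
    obtain ⟨w, D, hD, he⟩ := ih v C hC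
    cases D with
    | nil => exact absurd hD Walk.IsCycle.not_of_nil
    | @cons _ u _ h p =>
      refine ⟨u, p.append (Walk.cons h Walk.nil), ?_, ?_⟩
      · rw [Walk.isCycle_def] at hD ⊢
        obtain ⟨h1, h2, h3⟩ := hD
        refine ⟨?_, ?_, ?_⟩
        · rw [Walk.isTrail_def] at h1 ⊢
          rw [Walk.edges_append]
          rw [Walk.edges_cons] at h1
          refine (List.Perm.nodup_iff ?_).1 h1
          simpa using (List.perm_append_comm (l₁ := [s(w, u)]) (l₂ := p.edges))
        · intro hc
          have := congrArg Walk.length hc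
          simp at this
        · rw [Walk.support_cons, List.tail_cons] at h3
          rw [Walk.tail_support_append]
          rw [← Walk.cons_tail_support] at h3
          refine (List.Perm.nodup_iff ?_).1 h3
          simpa using (List.perm_append_comm (l₁ := [u]) (l₂ := p.support.tail))
      · rw [← List.rotate_rotate, ← he]
        simp [Walk.edges_append]

theorem first_hit (S : Set V) {u y : V} (p : G.Walk u y) (hy : y ∈ S) :
    ∃ (b : V) (p₁ : G.Walk u b) (p₂ : G.Walk b y), p = p₁.append p₂ ∧ b ∈ S ∧
      ∀ z ∈ p₁.support, z ∈ S → z = b := by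
  classical
  induction p with
  | @nil u => exact ⟨u, Walk.nil, Walk.nil, rfl, hy, by simp⟩
  | @cons u v w h p ih =>
    by_cases hu : u ∈ S
    · exact ⟨u, Walk.nil, Walk.cons h p, rfl, hu, by simp⟩
    · obtain ⟨b, p₁, p₂, rfl, hb, hz⟩ := ih hy
      refine ⟨b, Walk.cons h p₁, p₂, by simp, hb, ?_⟩
      intro z hz1 hzS
      rw [Walk.support_cons, List.mem_cons] at hz1
      rcases hz1 with rfl | hz1
      · exact absurd hzS hu
      · exact hz z hz1 hzS

theorem cycle_of_two (lab : Sym2 V → ℝ) {x y : V} (p : G.Walk x y) :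
    ∀ q : G.Walk x y, p.IsPath → q.IsPath → (p.edges.map lab).IsChain (· ≤ ·) →
    (q.edges.map lab).IsChain (· ≤ ·) → p ≠ q →
    ∃ (v : V) (C : G.Walk v v) (s : ℕ), C.IsCycle ∧ Uni (C.edges.map lab) s := by
  classical
  induction p with
  | nil =>
    intro q _ hq _ _ hne
    exact absurd (Walk.isPath_iff_eq_nil.1 hq).symm hne
  | @cons x u y h p ih =>
    intro q hp hq hip hiq hne
    cases q with
    | nil => exact absurd (Walk.isPath_iff_eq_nil.1 hp) hne
    | @cons _ w _ h' q =>
      by_cases huw : u = w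
      · subst huw
        refine ih q hp.of_cons hq.of_cons ?_ ?_ (fun he => hne (by rw [he]))
        · simpa using hip.tail
        · simpa using hiq.tail
      · obtain ⟨b, p₁, p₂, rfl, hb, hz⟩ := first_hit {z | z ∈ q.support} p (by simp)
        rw [Set.mem_setOf_eq] at hb
        obtain ⟨q₁, q₂, rfl⟩ := Walk.mem_support_iff_exists_append.1 hb
        rw [← Walk.cons_append] at hp hq hip hiq
        have hp1 := hp.of_append_left
        have hq1 := hq.of_append_left
        rw [Walk.edges_append, List.map_append] at hip hiq
        have ip1 := hip.left_of_append
        have iq1 := hiq.left_of_append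
        refine ⟨x, (Walk.cons h p₁).append (Walk.cons h' q₁).reverse,
          ((Walk.cons h p₁).edges.map lab).length, ?_, ?_⟩
        rotate_left
        · rw [Walk.edges_append, List.map_append, Walk.edges_reverse, List.map_reverse]
          apply uni_append ip1
          rw [List.isChain_reverse]
          exact iq1
        · rw [Walk.cons_append, Walk.cons_isCycle_iff]
          have hp2 := (Walk.cons_isPath_iff _ _).1 hp1
          have hq2 := (Walk.cons_isPath_iff _ _).1 hq1
          constructor
          · rw [Walk.isPath_def, Walk.support_append, List.nodup_append']
            refine ⟨hp2.1.support_nodup, ?_, ?_⟩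
            · exact hq1.reverse.support_nodup.tail
            · intro z hz1 hz2
              have hbn : b ∉ (Walk.cons h' q₁).reverse.support.tail := by
                have := hq1.reverse.support_nodup
                rw [← Walk.cons_tail_support, List.nodup_cons] at this
                exact this.1
              have hz3 := List.mem_of_mem_tail hz2
              rw [Walk.support_reverse, List.mem_reverse, Walk.support_cons, List.mem_cons] at hz3
              rcases hz3 with rfl | hz3
              · exact hp2.2 hz1
              · have := hz z hz1 (by
                  rw [Set.mem_setOf_eq, Walk.mem_support_append_iff]; exact Or.inl hz3)
                subst this
                exact hbn hz2
          · rw [Walk.edges_append, List.mem_append, Walk.edges_reverse, List.mem_reverse,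
              Walk.edges_cons, List.mem_cons]
            rintro (hc | hc | hc)
            · exact hp2.2 (Walk.fst_mem_support_of_mem_edges _ hc)
            · rw [Sym2.congr_right] at hc
              exact huw hc
            · exact hq2.2 (Walk.fst_mem_support_of_mem_edges _ hc)

theorem two_of_cycle (lab : Sym2 V → ℝ) {v : V} (C : G.Walk v v) (hC : C.IsCycle) (s : ℕ)
    (h1 : 1 ≤ s) (h2 : s < C.length) (hu : Uni (C.edges.map lab) s) :
    ¬ IsGoodLabeling G lab := by
  intro hg
  have hsplit : (C.take s).append (C.drop s) = C := by simp
  have hlen : (C.take s).length = s := by simp; omega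
  have hE := congrArg Walk.edges hsplit
  rw [Walk.edges_append] at hE
  have hnd := hC.edges_nodup
  rw [← hE] at hnd
  rw [← hE, List.map_append] at hu
  have hu' : Uni ((C.take s).edges.map lab ++ (C.drop s).edges.map lab)
      ((C.take s).edges.map lab).length := by
    rw [List.length_map, Walk.length_edges, hlen]; exact hu
  obtain ⟨c1, c2⟩ := hu'.split
  have heq := hg _ _ (C.take s) (C.drop s).reverse (hC.isPath_take h2)
    (hC.isPath_drop h1).reverse c1 (by
      show List.IsChain _ _
      rw [Walk.edges_reverse, List.map_reverse, List.isChain_reverse]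
      exact c2)
  have hmem : ∃ e, e ∈ (C.take s).edges := by
    apply List.exists_mem_of_length_pos
    rw [Walk.length_edges, hlen]; omega
  obtain ⟨e, he⟩ := hmem
  have he' := he
  rw [heq, Walk.edges_reverse, List.mem_reverse] at he'
  exact (List.nodup_append'.1 hnd).2.2 he he'

end Walks

/-- An edge-labeling `lab` of a graph `G` is good if and only if every cycle of `G` admits at
least two local minima, or at least two local maxima, with respect to `lab`. -/
theorem good_iff_two_local_extrema {V : Type*} [Fintype V] (G : SimpleGraph V)
    (lab : Sym2 V → ℝ) :
    IsGoodLabeling G lab ↔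
      ∀ (v : V) (C : G.Walk v v), C.IsCycle →
        TwoLocalMinima (C.edges.map lab) ∨ TwoLocalMaxima (C.edges.map lab) := by
  constructor
  · intro hg v C hC
    by_contra hcon
    rw [not_or] at hcon
    obtain ⟨r, s, h1, h2, hu⟩ := exists_uni (l := C.edges.map lab)
      (by simpa using hC.three_le_length) hcon.1
    obtain ⟨w, D, hD, he⟩ := exists_rotate r v C hC
    rw [← List.map_rotate, ← he] at hu
    refine two_of_cycle lab D hD s h1 ?_ hu hg
    have := congrArg List.length he
    simp at this h2
    omega
  · intro hall x y p q hp hq hip hiq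
    by_contra hne
    obtain ⟨v, C, s, hC, hu⟩ := cycle_of_two lab p q hp hq hip hiq hne
    rcases hall v C hC with h | h
    · exact hu.not_two_min h
    · exact hu.not_two_max h
end

section
/- Let G be a graph, let v be a cut-vertex of G, let C_1, …, C_p be the vertex sets of the connected components of G \ v, and let G_i = G[C_i ∪ {v}] for i ∈ [p]. Then, for any non-negative integer c, G admits a c-gel if and only if G_i admits a c-gel for every i ∈ [p]. -/
/-- A `c`-gel: a good edge-labeling taking at most `c` distinct values on the edges. -/
def IsCGel {V : Type*} (G : SimpleGraph V) (c : ℕ) (lab : Sym2 V → ℝ) : Prop :=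
  IsGoodLabeling G lab ∧ (lab '' G.edgeSet).ncard ≤ c

/-- `C` is the vertex set of a connected component of `G \ v`: it avoids `v`, is nonempty,
induces a connected subgraph, and has no edge of `G` to the rest of `G \ v`. -/
def IsCompOf {V : Type*} (G : SimpleGraph V) (v : V) (C : Set V) : Prop :=
  v ∉ C ∧ C.Nonempty ∧ (G.induce C).Connected ∧
  ∀ u w : V, u ∈ C → w ∉ C → w ≠ v → ¬ G.Adj u w

open SimpleGraph

/-- Goodness transfers along any relabeling which reflects the order of the labels. -/
theorem IsGoodLabeling.transfer {V : Type*} {G : SimpleGraph V} {lab lab' : Sym2 V → ℝ}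
    (h : IsGoodLabeling G lab)
    (hr : ∀ e ∈ G.edgeSet, ∀ e' ∈ G.edgeSet, lab' e ≤ lab' e' → lab e ≤ lab e') :
    IsGoodLabeling G lab' := by
  have key : ∀ (x y : V) (p : G.Walk x y), IsIncreasing G lab' p → IsIncreasing G lab p := by
    intro x y p hp
    refine (List.isChain_map lab).2 (List.IsChain.imp_of_mem_imp ?_ ((List.isChain_map lab').1 hp))
    intro a b ha hb hab
    exact hr a (p.edges_subset_edgeSet ha) b (p.edges_subset_edgeSet hb) hab
  intro x y p q hp hq hip hiq
  exact h x y p q hp hq (key _ _ p hip) (key _ _ q hiq)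

theorem isIncreasing_map_iff {V : Type*} {G : SimpleGraph V} (lab : Sym2 V → ℝ) (s : Set V)
    {x y : s} (p : (G.induce s).Walk x y) :
    IsIncreasing G lab (p.map (Embedding.induce s).toHom) ↔
      IsIncreasing (G.induce s) (lab ∘ Sym2.map Subtype.val) p := by
  unfold IsIncreasing
  rw [Walk.edges_map, List.map_map]
  rfl

theorem IsGoodLabeling.induce {V : Type*} {G : SimpleGraph V} {lab : Sym2 V → ℝ}
    (h : IsGoodLabeling G lab) (s : Set V) :
    IsGoodLabeling (G.induce s) (lab ∘ Sym2.map Subtype.val) := by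
  intro x y p q hp hq hip hiq
  have hinj : Function.Injective (Embedding.induce (G := G) s).toHom :=
    (Embedding.induce (G := G) s).injective
  apply Walk.map_injective_of_injective hinj
  exact h _ _ _ _ ((Walk.isPath_map_iff_of_injective hinj).2 hp)
    ((Walk.isPath_map_iff_of_injective hinj).2 hq)
    ((isIncreasing_map_iff lab s p).2 hip) ((isIncreasing_map_iff lab s q).2 hiq)

theorem eq_of_good_induce {V : Type*} {G : SimpleGraph V} {lab : Sym2 V → ℝ} {s : Set V}
    (h : IsGoodLabeling (G.induce s) (lab ∘ Sym2.map Subtype.val))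
    {x y : V} (p q : G.Walk x y) (hp : p.IsPath) (hq : q.IsPath)
    (hip : IsIncreasing G lab p) (hiq : IsIncreasing G lab q)
    (hps : ∀ a ∈ p.support, a ∈ s) (hqs : ∀ a ∈ q.support, a ∈ s) : p = q := by
  have e : p.induce s hps = q.induce s hqs := by
    apply h
    · apply Walk.IsPath.of_map (f := (Embedding.induce s).toHom)
      rwa [Walk.map_induce]
    · apply Walk.IsPath.of_map (f := (Embedding.induce s).toHom)
      rwa [Walk.map_induce]
    · rw [← isIncreasing_map_iff, Walk.map_induce]; exact hip
    · rw [← isIncreasing_map_iff, Walk.map_induce]; exact hiq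
  rw [← Walk.map_induce p hps, e, Walk.map_induce]

/-- A walk starting in a component and avoiding `v` stays in the component. -/
theorem IsCompOf.support_of_avoid {V : Type*} {G : SimpleGraph V} {v : V} {C : Set V}
    (hC : IsCompOf G v C) {x y : V} (p : G.Walk x y) (hx : x ∈ C) (hv : v ∉ p.support) :
    ∀ a ∈ p.support, a ∈ C := by
  induction p with
  | nil => simpa using hx
  | @cons x z y hadj p ih =>
    simp only [Walk.support_cons, List.mem_cons, not_or] at hv
    have hz : z ∈ C := by
      by_contra hz
      refine hC.2.2.2 x z hx hz ?_ hadj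
      rintro rfl
      exact hv.2 p.start_mem_support
    intro a ha
    simp only [Walk.support_cons, List.mem_cons] at ha
    rcases ha with rfl | ha
    · exact hx
    · exact ih hz hv.2 a ha

/-- A path from a component to `v` stays in the component together with `v`. -/
theorem IsCompOf.support_to {V : Type*} {G : SimpleGraph V} {v : V} {C : Set V}
    (hC : IsCompOf G v C) {x y : V} (p : G.Walk x y) (hy : y = v) (hp : p.IsPath)
    (hx : x ∈ C ∪ {v}) : ∀ a ∈ p.support, a ∈ C ∪ {v} := by
  induction p with
  | nil => simpa using hx
  | @cons x z y hadj p ih =>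
    rw [Walk.cons_isPath_iff] at hp
    have hxv : x ≠ v := by
      rintro rfl
      subst hy
      exact hp.2 p.end_mem_support
    have hxC : x ∈ C := by
      rcases hx with h | h
      · exact h
      · exact absurd h hxv
    have hz : z ∈ C ∪ {v} := by
      by_contra hz
      simp only [Set.mem_union, Set.mem_singleton_iff, not_or] at hz
      exact hC.2.2.2 x z hxC hz.1 hz.2 hadj
    intro a ha
    simp only [Walk.support_cons, List.mem_cons] at ha
    rcases ha with rfl | ha
    · exact hx
    · exact ih hy hp.1 hz a ha

open Classical in
theorem IsCompOf.support_path {V : Type*} {G : SimpleGraph V} {v : V} {C : Set V}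
    (hC : IsCompOf G v C) {x y : V} (p : G.Walk x y) (hp : p.IsPath)
    (hx : x ∈ C ∪ {v}) (hy : y ∈ C ∪ {v}) : ∀ a ∈ p.support, a ∈ C ∪ {v} := by
  intro a ha
  by_cases hv : v ∈ p.support
  · rw [← Walk.take_spec p hv, Walk.mem_support_append_iff] at ha
    rcases ha with ha | ha
    · exact hC.support_to _ rfl (hp.takeUntil hv) hx a ha
    · refine hC.support_to (p.dropUntil v hv).reverse rfl (hp.dropUntil hv).reverse hy a ?_
      simpa using ha
  · refine Or.inl (hC.support_of_avoid p ?_ hv a ha)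
    rcases hx with h | h
    · exact h
    · rw [Set.mem_singleton_iff] at h
      subst h
      exact absurd p.start_mem_support hv

theorem IsCompOf.subset {V : Type*} {G : SimpleGraph V} {v : V} {C D : Set V}
    (hC : IsCompOf G v C) (hD : IsCompOf G v D) {a : V} (ha : a ∈ C) (ha' : a ∈ D) : C ⊆ D := by
  intro w hw
  obtain ⟨p⟩ := hC.2.2.1.preconnected ⟨a, ha⟩ ⟨w, hw⟩
  refine hD.support_of_avoid (p.map (Embedding.induce C).toHom) ha' ?_ w (Walk.end_mem_support _)
  rw [Walk.support_map, List.mem_map]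
  rintro ⟨b, -, hb⟩
  exact hC.1 (hb ▸ b.2)

theorem exists_comp {V : Type*} (G : SimpleGraph V) (v u : V) (hu : u ≠ v) :
    ∃ C : Set V, IsCompOf G v C ∧ u ∈ C := by
  let H := G.induce ({v}ᶜ : Set V)
  let K : H.ConnectedComponent := H.connectedComponentMk ⟨u, hu⟩
  have hmem : ∀ z : K.supp, (z.1.1 : V) ∈ (Subtype.val '' K.supp : Set V) := fun z => ⟨z.1, z.2, rfl⟩
  let f : K.toSimpleGraph →g G.induce (Subtype.val '' K.supp : Set V) :=
    { toFun := fun (z : K.supp) => ⟨z.1.1, hmem z⟩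
      map_rel' := fun {a b} h => h }
  refine ⟨Subtype.val '' K.supp, ⟨?_, ?_, ?_, ?_⟩, ⟨⟨u, hu⟩, rfl, rfl⟩⟩
  · rintro ⟨z, -, hz⟩
    exact z.2 hz
  · exact ⟨u, ⟨u, hu⟩, rfl, rfl⟩
  · refine K.connected_toSimpleGraph.map f ?_
    rintro ⟨_, z, hz, rfl⟩
    exact ⟨⟨z, hz⟩, rfl⟩
  · rintro _ w ⟨z, hz, rfl⟩ hw hwv hadj
    refine hw ⟨⟨w, hwv⟩, ?_, rfl⟩
    have h : H.Adj z ⟨w, hwv⟩ := hadj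
    exact (K.mem_supp_congr_adj h).1 hz

/-- A `c`-gel of an induced subgraph may be taken with values in `{0, ..., c-1}`. -/
theorem cgel_normalize {V : Type*} [Fintype V] (G : SimpleGraph V) (s : Set V) (c : ℕ)
    (lab : Sym2 s → ℝ) (h : IsCGel (G.induce s) c lab) :
    ∃ L : Sym2 V → ℝ, IsGoodLabeling (G.induce s) (L ∘ Sym2.map Subtype.val) ∧
      ∀ e ∈ (G.induce s).edgeSet, ∃ k < c, L (Sym2.map Subtype.val e) = (k : ℝ) := by
  classical
  let S : Set ℝ := lab '' (G.induce s).edgeSet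
  have hfin : S.Finite := (Set.toFinite _).image _
  let r : ℝ → ℕ := fun x => {t ∈ S | t < x}.ncard
  have hinj : Function.Injective (Sym2.map (Subtype.val : s → V)) :=
    Sym2.map.injective Subtype.val_injective
  have hL : ∀ e, Function.extend (Sym2.map (Subtype.val : s → V)) (fun e => (r (lab e) : ℝ))
      (fun _ => 0) (Sym2.map Subtype.val e) = (r (lab e) : ℝ) := fun e => hinj.extend_apply _ _ e
  refine ⟨_, h.1.transfer ?_, fun e he => ⟨r (lab e), ?_, hL e⟩⟩
  · intro e he e' he' hle
    simp only [Function.comp_apply] at hle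
    rw [hL, hL, Nat.cast_le] at hle
    by_contra hlt
    rw [not_le] at hlt
    refine absurd hle (not_le.2 (Set.ncard_lt_ncard ?_ (hfin.subset fun t ht => ht.1)))
    have hss : {t ∈ S | t < lab e'} ⊆ {t ∈ S | t < lab e} := fun t ht => ⟨ht.1, ht.2.trans hlt⟩
    refine (Set.ssubset_iff_of_subset hss).2
      ⟨lab e', ⟨⟨e', he', rfl⟩, hlt⟩, fun ht => lt_irrefl _ ht.2⟩
  · refine lt_of_lt_of_le (Set.ncard_lt_ncard ?_ hfin) h.2
    exact (Set.ssubset_iff_of_subset fun t ht => ht.1).2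
      ⟨lab e, ⟨e, he, rfl⟩, fun ht => lt_irrefl _ ht.2⟩

theorem glue {V : Type*} (G : SimpleGraph V) (v : V) (c : ℕ) (L : Set V → Sym2 V → ℝ)
    (hL : ∀ C, IsCompOf G v C →
      IsGoodLabeling (G.induce (C ∪ {v})) (L C ∘ Sym2.map Subtype.val) ∧
      ∀ e ∈ (G.induce (C ∪ {v})).edgeSet, ∃ k < c, L C (Sym2.map Subtype.val e) = (k : ℝ)) :
    ∃ lab : Sym2 V → ℝ, IsCGel G c lab := by
  classical
  let P : Sym2 V → Set V → Prop := fun e C => IsCompOf G v C ∧ ∀ a ∈ e, a ∈ C ∪ {v}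
  let lab : Sym2 V → ℝ := fun e => if h : ∃ C, P e C then L h.choose e else 0
  -- the labeling agrees with `L C` on the edges of each piece
  have agree : ∀ C, IsCompOf G v C → ∀ e ∈ G.edgeSet, (∀ a ∈ e, a ∈ C ∪ {v}) →
      lab e = L C e := by
    intro C hC e he hs
    have h : ∃ C, P e C := ⟨C, hC, hs⟩
    have hP := h.choose_spec
    have hne : ∃ a ∈ e, a ≠ v := by
      induction e with
      | _ a b =>
        rw [mem_edgeSet] at he
        by_cases ha : a = v
        · exact ⟨b, Sym2.mem_mk_right a b, fun hb => he.ne (ha.trans hb.symm)⟩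
        · exact ⟨a, Sym2.mem_mk_left a b, ha⟩
    obtain ⟨a, hae, hav⟩ := hne
    have h1 : a ∈ C := (hs a hae).resolve_right hav
    have h2 : a ∈ h.choose := (hP.2 a hae).resolve_right hav
    have heq : h.choose = C :=
      Set.Subset.antisymm (hP.1.subset hC h2 h1) (hC.subset hP.1 h1 h2)
    simp only [lab, dif_pos h]
    rw [heq]
  have memedge : ∀ C : Set V, ∀ e ∈ (G.induce (C ∪ {v})).edgeSet,
      Sym2.map Subtype.val e ∈ G.edgeSet ∧ ∀ a ∈ Sym2.map Subtype.val e, a ∈ C ∪ {v} := by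
    intro C e he
    refine ⟨?_, ?_⟩
    · induction e with
      | _ a b => exact he
    · intro a ha
      obtain ⟨b, -, rfl⟩ := Sym2.mem_map.1 ha
      exact b.2
  have good : ∀ C, IsCompOf G v C →
      IsGoodLabeling (G.induce (C ∪ {v})) (lab ∘ Sym2.map Subtype.val) := by
    intro C hC
    refine (hL C hC).1.transfer ?_
    intro e he e' he' hle
    simp only [Function.comp_apply] at hle ⊢
    rwa [agree C hC _ (memedge C e he).1 (memedge C e he).2,
      agree C hC _ (memedge C e' he').1 (memedge C e' he').2] at hle
  have same : ∀ C, IsCompOf G v C → ∀ x y : V, x ∈ C ∪ {v} → y ∈ C ∪ {v} →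
      ∀ p q : G.Walk x y, p.IsPath → q.IsPath → IsIncreasing G lab p → IsIncreasing G lab q →
      p = q := by
    intro C hC x y hx hy p q hp hq hip hiq
    exact eq_of_good_induce (good C hC) p q hp hq hip hiq (hC.support_path p hp hx hy)
      (hC.support_path q hq hx hy)
  refine ⟨lab, ?_, ?_⟩
  · intro x y p q hp hq hip hiq
    by_cases hx : x = v
    · by_cases hy : y = v
      · subst hx
        subst hy
        rw [Walk.isPath_iff_eq_nil.1 hp, Walk.isPath_iff_eq_nil.1 hq]
      · obtain ⟨C, hC, hyC⟩ := exists_comp G v y hy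
        exact same C hC x y (Or.inr hx) (Or.inl hyC) p q hp hq hip hiq
    · obtain ⟨C, hC, hxC⟩ := exists_comp G v x hx
      by_cases hyC : y ∈ C ∪ {v}
      · exact same C hC x y (Or.inl hxC) hyC p q hp hq hip hiq
      · have hy : y ≠ v := fun h => hyC (Or.inr h)
        obtain ⟨D, hD, hyD⟩ := exists_comp G v y hy
        have through : ∀ w : G.Walk x y, v ∈ w.support := by
          intro w
          by_contra hw
          exact hyC (Or.inl (hC.support_of_avoid w hxC hw y w.end_mem_support))
        have split : ∀ (w : G.Walk x y) (hw : v ∈ w.support), IsIncreasing G lab w →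
            IsIncreasing G lab (w.takeUntil v hw) ∧ IsIncreasing G lab (w.dropUntil v hw) := by
          intro w hw hi
          unfold IsIncreasing at hi
          rw [← Walk.take_spec w hw, Walk.edges_append, List.map_append] at hi
          have hi' := List.isChain_append.1 hi
          exact ⟨hi'.1, hi'.2.1⟩
        have hvp := through p
        have hvq := through q
        have e1 := same C hC x v (Or.inl hxC) (Or.inr rfl) _ _ (hp.takeUntil hvp)
          (hq.takeUntil hvq) (split p hvp hip).1 (split q hvq hiq).1
        have e2 := same D hD v y (Or.inr rfl) (Or.inl hyD) _ _ (hp.dropUntil hvp)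
          (hq.dropUntil hvq) (split p hvp hip).2 (split q hvq hiq).2
        rw [← Walk.take_spec p hvp, e1, e2, Walk.take_spec]
  · have hsub : lab '' G.edgeSet ⊆ ((Finset.range c).image (fun k : ℕ => (k : ℝ)) : Finset ℝ) := by
      have aux : ∀ a b : V, G.Adj a b → a ≠ v → ∃ k < c, lab s(a, b) = (k : ℝ) := by
        intro a b hab ha
        obtain ⟨C, hC, haC⟩ := exists_comp G v a ha
        have hb : b ∈ C ∪ {v} := by
          by_contra hb
          simp only [Set.mem_union, Set.mem_singleton_iff, not_or] at hb
          exact hC.2.2.2 a b haC hb.1 hb.2 hab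
        obtain ⟨k, hk, hk'⟩ := (hL C hC).2 s(⟨a, Or.inl haC⟩, ⟨b, hb⟩) hab
        refine ⟨k, hk, ?_⟩
        rw [agree C hC s(a, b) hab, ← hk', Sym2.map_mk]
        intro z hz
        rcases Sym2.mem_iff.1 hz with rfl | rfl
        · exact Or.inl haC
        · exact hb
      rintro _ ⟨e, he, rfl⟩
      have : ∃ k < c, lab e = (k : ℝ) := by
        induction e with
        | _ a b =>
          rw [mem_edgeSet] at he
          by_cases ha : a = v
          · rw [Sym2.eq_swap]
            exact aux b a he.symm fun hb => he.ne (ha.trans hb.symm)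
          · exact aux a b he ha
      obtain ⟨k, hk, hk'⟩ := this
      rw [hk']
      simpa using hk
    refine (Set.ncard_le_ncard hsub (Finset.finite_toSet _)).trans ?_
    rw [Set.ncard_coe_finset]
    exact Finset.card_image_le.trans (by simp)

/-- Let `v` be a cut-vertex of `G` (i.e. `G` is connected and `G \ v` is disconnected).
Then, for any non-negative integer `c`, `G` admits a `c`-gel if and only if, for every
vertex set `C` of a connected component of `G \ v`, the induced subgraph `G[C ∪ {v}]`
admits a `c`-gel. -/
theorem cgel_iff_components_at_cut_vertex {V : Type*} [Fintype V] (G : SimpleGraph V)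
    (v : V) (hconn : G.Connected)
    (hcut : ¬ (G.induce ({v}ᶜ : Set V)).Connected) (c : ℕ) :
    (∃ lab : Sym2 V → ℝ, IsCGel G c lab) ↔
      ∀ C : Set V, IsCompOf G v C →
        ∃ lab : Sym2 ↥(C ∪ {v} : Set V) → ℝ, IsCGel (G.induce (C ∪ {v})) c lab := by
  constructor
  · rintro ⟨lab, hg, hc⟩ C -
    refine ⟨lab ∘ Sym2.map Subtype.val, hg.induce _, le_trans (Set.ncard_le_ncard ?_ ?_) hc⟩
    · rintro _ ⟨e, he, rfl⟩
      refine ⟨Sym2.map Subtype.val e, ?_, rfl⟩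
      induction e with
      | _ a b => exact he
    · exact (Set.toFinite _).image _
  · intro h
    have h' : ∀ C : Set V, ∃ L : Sym2 V → ℝ, IsCompOf G v C →
        IsGoodLabeling (G.induce (C ∪ {v})) (L ∘ Sym2.map Subtype.val) ∧
        ∀ e ∈ (G.induce (C ∪ {v})).edgeSet, ∃ k < c, L (Sym2.map Subtype.val e) = (k : ℝ) := by
      intro C
      by_cases hC : IsCompOf G v C
      · obtain ⟨lab, hlab⟩ := h C hC
        obtain ⟨L, hL⟩ := cgel_normalize G _ c lab hlab
        exact ⟨L, fun _ => hL⟩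
      · exact ⟨fun _ => 0, fun hC' => absurd hC' hC⟩
    choose L hL using h'
    exact glue G v c L hL
end

section
/- A graph G admits a c-gel if and only if the line graph L of G admits a good partial orientation all of whose partial dipaths have order at most c. -/
/-- The line graph of `G`: vertices are the edges of `G`, two distinct edges being adjacent
if and only if they share an endpoint. -/
def LineGraph {V : Type*} (G : SimpleGraph V) : SimpleGraph ↥G.edgeSet :=
  SimpleGraph.fromRel (fun e f => ∃ v : V, v ∈ e.val ∧ v ∈ f.val)

/-- A *partial orientation* of a graph `H`: a set `O` of ordered pairs of vertices such that
every pair in `O` is an edge of `H` and no edge is oriented in both directions. -/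
def IsPartialOrientation {α : Type*} (H : SimpleGraph α) (O : Set (α × α)) : Prop :=
  ∀ p ∈ O, H.Adj p.1 p.2 ∧ (p.2, p.1) ∉ O

/-- `T` is a *source* of the subgraph of `H` induced by `S`, with respect to the restriction
of the partial orientation `O`: no edge inside `T` is oriented, and every edge from `T` to
`S \ T` is oriented away from `T`. -/
def IsSourceIn {α : Type*} (H : SimpleGraph α) (O : Set (α × α)) (S T : Set α) : Prop :=
  T ⊆ S ∧
  (∀ u ∈ T, ∀ v ∈ T, H.Adj u v → (u, v) ∉ O ∧ (v, u) ∉ O) ∧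
  (∀ u ∈ T, ∀ v ∈ S, v ∉ T → H.Adj u v → (u, v) ∈ O)

/-- `T` is a *sink* of the subgraph of `H` induced by `S`, with respect to the restriction
of the partial orientation `O`: no edge inside `T` is oriented, and every edge from `T` to
`S \ T` is oriented towards `T`. -/
def IsSinkIn {α : Type*} (H : SimpleGraph α) (O : Set (α × α)) (S T : Set α) : Prop :=
  T ⊆ S ∧
  (∀ u ∈ T, ∀ v ∈ T, H.Adj u v → (u, v) ∉ O ∧ (v, u) ∉ O) ∧
  (∀ u ∈ T, ∀ v ∈ S, v ∉ T → H.Adj u v → (v, u) ∈ O)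

/-- The subgraph of `H` induced by `S` has at least two (nonempty, distinct) sources. -/
def TwoSourcesIn {α : Type*} (H : SimpleGraph α) (O : Set (α × α)) (S : Set α) : Prop :=
  ∃ T₁ T₂ : Set α, T₁.Nonempty ∧ T₂.Nonempty ∧ T₁ ≠ T₂ ∧
    IsSourceIn H O S T₁ ∧ IsSourceIn H O S T₂

/-- The subgraph of `H` induced by `S` has at least two (nonempty, distinct) sinks. -/
def TwoSinksIn {α : Type*} (H : SimpleGraph α) (O : Set (α × α)) (S : Set α) : Prop :=
  ∃ T₁ T₂ : Set α, T₁.Nonempty ∧ T₂.Nonempty ∧ T₁ ≠ T₂ ∧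
    IsSinkIn H O S T₁ ∧ IsSinkIn H O S T₂

/-- `(H, O)` contains a *partial dicycle*: a cycle of `H` with at least one oriented edge,
all of whose oriented edges go in the same direction in a cyclic ordering of the cycle. -/
def HasPartialDicycle {α : Type*} (H : SimpleGraph α) (O : Set (α × α)) : Prop :=
  ∃ (a : α) (q : H.Walk a a), q.IsCycle ∧
    (∀ d ∈ q.darts, (d.toProd.2, d.toProd.1) ∉ O) ∧
    (∃ d ∈ q.darts, d.toProd ∈ O)

/-- A partial orientation `O` of the line graph of `G` is *good* if it is transitive (no
partial dicycle) and, for every cycle `C` of `G`, the corresponding cycle in the line graph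
(the subgraph induced by the edges of `C`) has at least two sources, or at least two sinks,
with respect to the restriction of `O`. -/
def IsGoodPO {V : Type*} (G : SimpleGraph V) (O : Set (↥G.edgeSet × ↥G.edgeSet)) : Prop :=
  ¬ HasPartialDicycle (LineGraph G) O ∧
  ∀ (v : V) (C : G.Walk v v), C.IsCycle →
    TwoSourcesIn (LineGraph G) O {e : ↥G.edgeSet | e.val ∈ C.edges} ∨
    TwoSinksIn (LineGraph G) O {e : ↥G.edgeSet | e.val ∈ C.edges}

open Classical in
/-- The *order* of a partial dipath, given by its list of darts (as ordered pairs): the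
number of its oriented edges plus one. -/
noncomputable def dipathOrder {α : Type*} (O : Set (α × α)) (l : List (α × α)) : ℕ :=
  l.countP (fun p => decide (p ∈ O)) + 1

open SimpleGraph

namespace CGel

/-- Two intersecting sources differing from one another produce disjoint sources. -/
lemma source_diff {α : Type*} {H : SimpleGraph α} {O : Set (α × α)} {S T₁ T₂ : Set α}
    (h₁ : IsSourceIn H O S T₁) (h₂ : IsSourceIn H O S T₂) : IsSourceIn H O S (T₁ \ T₂) := by
  refine ⟨fun u hu => h₁.1 hu.1, fun u hu v hv => h₁.2.1 u hu.1 v hv.1, ?_⟩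
  intro u hu v hv hvT huv
  by_cases hv1 : v ∈ T₁
  · have hv2 : v ∈ T₂ := by
      by_contra h
      exact hvT ⟨hv1, h⟩
    exact absurd (h₂.2.2 v hv2 u (h₁.1 hu.1) hu.2 huv.symm) (h₁.2.1 u hu.1 v hv1 huv).2
  · exact h₁.2.2 u hu.1 v hv hv1 huv

lemma not_twoSources {α : Type*} {H : SimpleGraph α} {O : Set (α × α)} {S : Set α}
    (h : ∀ T₁ T₂ : Set α, T₁.Nonempty → T₂.Nonempty → IsSourceIn H O S T₁ →
      IsSourceIn H O S T₂ → (T₁ ∩ T₂).Nonempty) : ¬ TwoSourcesIn H O S := by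
  rintro ⟨T₁, T₂, n1, n2, hne, h1, h2⟩
  by_cases hs : T₁ ⊆ T₂
  · have : ¬ T₂ ⊆ T₁ := fun h' => hne (hs.antisymm h')
    obtain ⟨x, hx, hx'⟩ := Set.not_subset.1 this
    obtain ⟨y, hy, hy'⟩ := h (T₂ \ T₁) T₁ ⟨x, hx, hx'⟩ n1 (source_diff h2 h1) h1
    exact hy.2 hy'
  · obtain ⟨x, hx, hx'⟩ := Set.not_subset.1 hs
    obtain ⟨y, hy, hy'⟩ := h (T₁ \ T₂) T₂ ⟨x, hx, hx'⟩ n2 (source_diff h1 h2) h2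
    exact hy.2 hy'

variable {V : Type*} {G : SimpleGraph V}

lemma lineGraph_adj {e f : G.edgeSet} :
    (LineGraph G).Adj e f ↔ e ≠ f ∧ ∃ v : V, v ∈ e.val ∧ v ∈ f.val := by
  simp only [LineGraph, SimpleGraph.fromRel_adj]
  constructor
  · rintro ⟨h, h' | ⟨v, hv, hv'⟩⟩
    · exact ⟨h, h'⟩
    · exact ⟨h, v, hv', hv⟩
  · rintro ⟨h, h'⟩
    exact ⟨h, Or.inl h'⟩

lemma increasing_iff {lab : Sym2 V → ℝ} {x y : V} {p : G.Walk x y} :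
    IsIncreasing G lab p ↔ (p.edges.map lab).IsChain (· ≤ ·) := Iff.rfl

/-- Descending along an increasing walk one stays in a source. -/
lemma descend {O : Set (G.edgeSet × G.edgeSet)} {lab : Sym2 V → ℝ}
    (hO : ∀ e f : G.edgeSet, (e, f) ∈ O → lab e.val < lab f.val)
    {S T : Set G.edgeSet} (hT : IsSourceIn (LineGraph G) O S T) {a b : V} (w : G.Walk a b) :
    ∀ {z : V} (h : G.Adj z a), (∀ e : G.edgeSet, e.val ∈ (Walk.cons h w).edges → e ∈ S) →
    IsIncreasing G lab (Walk.cons h w) → ∀ u ∈ T, u.val ∈ (Walk.cons h w).edges →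
    (⟨s(z, a), h⟩ : G.edgeSet) ∈ T := by
  induction w with
  | nil =>
    intro z h hS hi u hu hu'
    simp only [Walk.edges_cons, Walk.edges_nil, List.mem_singleton] at hu'
    have : u = ⟨s(z, _), h⟩ := Subtype.ext hu'
    rwa [← this]
  | @cons a a' b h' w ih =>
    intro z h hS hi u hu hu'
    rw [Walk.edges_cons, List.mem_cons] at hu'
    rcases hu' with hu' | hu'
    · have : u = ⟨s(z, _), h⟩ := Subtype.ext hu'
      rwa [← this]
    · have hi2 : lab s(z, a) ≤ lab s(a, a') ∧ IsIncreasing G lab (Walk.cons h' w) := by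
        rw [increasing_iff] at hi ⊢
        simpa using hi
      have h1 := ih h' (fun e he => hS e (by rw [Walk.edges_cons]; exact List.mem_cons_of_mem _ he))
        hi2.2 u hu hu'
      by_contra hn
      have hadj : (LineGraph G).Adj ⟨s(a, a'), h'⟩ ⟨s(z, a), h⟩ := by
        rw [lineGraph_adj]
        refine ⟨fun hh => hn (hh ▸ h1), a, by simp, by simp⟩
      have := hO _ _ (hT.2.2 _ h1 _ (hS _ (by simp)) hn hadj)
      exact absurd hi2.1 (not_le.2 this)

lemma sources_meet {O : Set (G.edgeSet × G.edgeSet)} {lab : Sym2 V → ℝ}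
    (hO : ∀ e f : G.edgeSet, (e, f) ∈ O → lab e.val < lab f.val)
    {S : Set G.edgeSet} {a b : V} (p q : G.Walk a b) (hp : ¬ p.Nil) (hq : ¬ q.Nil)
    (hpi : IsIncreasing G lab p) (hqi : IsIncreasing G lab q)
    (hS : ∀ e : G.edgeSet, e ∈ S ↔ e.val ∈ p.edges ∨ e.val ∈ q.edges) :
    ¬ TwoSourcesIn (LineGraph G) O S := by
  cases p with
  | nil => simp at hp
  | @cons _ c _ h p =>
  cases q with
  | nil => simp at hq
  | @cons _ d _ h' q =>
  have key : ∀ T, T.Nonempty → IsSourceIn (LineGraph G) O S T →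
      ((⟨s(a, c), h⟩ : G.edgeSet) ∈ T ∨ (⟨s(a, d), h'⟩ : G.edgeSet) ∈ T) := by
    rintro T ⟨u, hu⟩ hT
    rcases (hS u).1 (hT.1 hu) with h1 | h1
    · exact Or.inl (descend hO hT p h (fun e he => (hS e).2 (Or.inl he)) hpi u hu h1)
    · exact Or.inr (descend hO hT q h' (fun e he => (hS e).2 (Or.inr he)) hqi u hu h1)
  have step : ∀ T, IsSourceIn (LineGraph G) O S T → ∀ e f : G.edgeSet, a ∈ e.val → a ∈ f.val →
      f ∈ S → lab f.val ≤ lab e.val → e ∈ T → f ∈ T := by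
    intro T hT e f hae haf hf hl he
    by_contra hn
    have hadj : (LineGraph G).Adj e f := lineGraph_adj.2 ⟨fun hh => hn (hh ▸ he), a, hae, haf⟩
    exact absurd hl (not_le.2 (hO _ _ (hT.2.2 _ he _ hf hn hadj)))
  have hcS : (⟨s(a, c), h⟩ : G.edgeSet) ∈ S := (hS _).2 (Or.inl (by simp))
  have hdS : (⟨s(a, d), h'⟩ : G.edgeSet) ∈ S := (hS _).2 (Or.inr (by simp))
  apply not_twoSources
  intro T₁ T₂ n1 n2 h1 h2
  rcases le_total (lab s(a, c)) (lab s(a, d)) with hl | hl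
  · have : ∀ T, T.Nonempty → IsSourceIn (LineGraph G) O S T →
        (⟨s(a, c), h⟩ : G.edgeSet) ∈ T := fun T hn hT =>
      (key T hn hT).elim id (step T hT _ _ (by simp) (by simp) hcS hl)
    exact ⟨_, this _ n1 h1, this _ n2 h2⟩
  · have : ∀ T, T.Nonempty → IsSourceIn (LineGraph G) O S T →
        (⟨s(a, d), h'⟩ : G.edgeSet) ∈ T := fun T hn hT =>
      (key T hn hT).elim (step T hT _ _ (by simp) (by simp) hdS hl) id
    exact ⟨_, this _ n1 h1, this _ n2 h2⟩

lemma increasing_reverse {lab : Sym2 V → ℝ} {a b : V} {p : G.Walk a b}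
    (h : IsIncreasing G lab p) : IsIncreasing G (fun e => - lab e) p.reverse := by
  rw [increasing_iff] at *
  rw [Walk.edges_reverse, List.map_reverse]
  rw [List.isChain_reverse]
  rw [List.isChain_map] at *
  simpa using h

lemma sinks_meet {O : Set (G.edgeSet × G.edgeSet)} {lab : Sym2 V → ℝ}
    (hO : ∀ e f : G.edgeSet, (e, f) ∈ O → lab e.val < lab f.val)
    {S : Set G.edgeSet} {a b : V} (p q : G.Walk a b) (hp : ¬ p.Nil) (hq : ¬ q.Nil)
    (hpi : IsIncreasing G lab p) (hqi : IsIncreasing G lab q)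
    (hS : ∀ e : G.edgeSet, e ∈ S ↔ e.val ∈ p.edges ∨ e.val ∈ q.edges) :
    ¬ TwoSinksIn (LineGraph G) O S := by
  have hconv : ∀ T, IsSinkIn (LineGraph G) O S T →
      IsSourceIn (LineGraph G) {x | (x.2, x.1) ∈ O} S T := by
    rintro T ⟨h1, h2, h3⟩
    exact ⟨h1, fun u hu v hv h => (h2 u hu v hv h).symm, h3⟩
  rintro ⟨T₁, T₂, n1, n2, hne, h1, h2⟩
  refine sources_meet (G := G) (O := {x | (x.2, x.1) ∈ O}) (lab := fun e => - lab e) (S := S)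
    ?_ p.reverse q.reverse (by simpa using hp) (by simpa using hq)
    (increasing_reverse hpi) (increasing_reverse hqi) (by simpa using hS)
    ⟨T₁, T₂, n1, n2, hne, hconv _ h1, hconv _ h2⟩
  intro e f h
  exact neg_lt_neg (hO f e h)

lemma good_of_orientation {O : Set (G.edgeSet × G.edgeSet)} {lab : Sym2 V → ℝ}
    (hO : ∀ e f : G.edgeSet, (e, f) ∈ O → lab e.val < lab f.val)
    (hgood : IsGoodPO G O) : IsGoodLabeling G lab := by
  intro x y p q hp hq hpi hqi
  by_contra hne
  obtain ⟨a, b, p', q', hp', hq', hc⟩ := hp.exists_isCycle_of_ne hq hne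
  have hpp := Walk.isPath_of_isSubwalk hp' hp
  have hqp := Walk.isPath_of_isSubwalk hq' hq
  have inc : ∀ {p : G.Walk x y} {p' : G.Walk a b}, p'.IsSubwalk p → IsIncreasing G lab p →
      IsIncreasing G lab p' := by
    rintro p p' ⟨r, t, rfl⟩ hi
    rw [increasing_iff] at *
    simp only [Walk.edges_append, List.map_append] at hi
    exact (List.IsChain.left_of_append hi).right_of_append
  have hab : a ≠ b := by
    rintro rfl
    have h1 := (Walk.isPath_iff_nil).1 hpp
    have h2 := (Walk.isPath_iff_nil).1 hqp
    have h3 := hc.three_le_length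
    rw [← Walk.length_eq_zero_iff] at h1 h2
    rw [Walk.length_append, Walk.length_reverse] at h3
    omega
  have hpn : ¬ p'.Nil := Walk.not_nil_of_ne hab
  have hqn : ¬ q'.Nil := Walk.not_nil_of_ne hab
  have hS : ∀ e : G.edgeSet, e ∈ {e : G.edgeSet | e.val ∈ (p'.append q'.reverse).edges} ↔
      e.val ∈ p'.edges ∨ e.val ∈ q'.edges := by
    intro e
    simp
  rcases hgood.2 a _ hc with h | h
  · exact sources_meet hO p' q' hpn hqn (inc hp' hpi) (inc hq' hqi) hS h
  · exact sinks_meet hO p' q' hpn hqn (inc hp' hpi) (inc hq' hqi) hS h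

open Classical in
/-- The set of numbers of oriented edges of partial dipaths ending at `e`. -/
def ordSet {α : Type*} (H : SimpleGraph α) (O : Set (α × α)) (e : α) : Set ℕ :=
  {n | ∃ (x : α) (w : H.Walk x e), w.IsPath ∧ (∀ d ∈ w.darts, (d.toProd.2, d.toProd.1) ∉ O) ∧
    (w.darts.map SimpleGraph.Dart.toProd).countP (fun p => decide (p ∈ O)) = n}

lemma ordSet_step {α : Type*} {H : SimpleGraph α} {O : Set (α × α)}
    (hP : IsPartialOrientation H O) (hD : ¬ HasPartialDicycle H O) {e f : α} (hef : (e, f) ∈ O)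
    {n : ℕ} (hn : n ∈ ordSet H O e) : n + 1 ∈ ordSet H O f := by
  classical
  obtain ⟨x, w, hw, hd, hc⟩ := hn
  have hadj : H.Adj e f := (hP _ hef).1
  by_cases hf : f ∈ w.support
  · exfalso
    apply hD
    refine ⟨e, Walk.cons hadj (w.dropUntil f hf), ?_, ?_, ⟨⟨(e, f), hadj⟩, by simp, hef⟩⟩
    · rw [Walk.cons_isCycle_iff]
      refine ⟨hw.dropUntil hf, ?_⟩
      intro hmem
      have hmem' := Walk.edges_dropUntil_subset_edges w hf hmem
      rw [Walk.edges, List.mem_map] at hmem'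
      obtain ⟨d, hdm, hde⟩ := hmem'
      rcases (SimpleGraph.dart_edge_eq_mk'_iff).1 hde with h | h
      · have h1 : e ∈ w.support.dropLast := by
          rw [← Walk.map_fst_darts]
          exact List.mem_map.2 ⟨d, hdm, by rw [h]⟩
        have h2 := hw.support_nodup
        rw [← List.dropLast_append_getLast (Walk.support_ne_nil w), Walk.getLast_support] at h2
        rw [List.nodup_append] at h2
        exact h2.2.2 e h1 e (by simp) rfl
      · have := hd d hdm
        rw [h] at this
        exact this hef
    · intro d hdm
      rw [Walk.darts_cons, List.mem_cons] at hdm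
      rcases hdm with rfl | hdm
      · exact (hP _ hef).2
      · exact hd d (Walk.darts_dropUntil_subset_darts w hf hdm)
  · refine ⟨x, w.concat hadj, hw.concat hf hadj, ?_, ?_⟩
    · intro d hdm
      rw [Walk.darts_concat, List.concat_eq_append, List.mem_append, List.mem_singleton] at hdm
      rcases hdm with hdm | rfl
      · exact hd d hdm
      · exact (hP _ hef).2
    · rw [Walk.darts_concat, List.concat_eq_append, List.map_append, List.countP_append, hc]
      simp [hef]

lemma backward {c : ℕ} (O : Set (G.edgeSet × G.edgeSet))
    (hP : IsPartialOrientation (LineGraph G) O) (hgood : IsGoodPO G O)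
    (hc : ∀ (x y : ↥G.edgeSet) (w : (LineGraph G).Walk x y), w.IsPath →
        (∀ d ∈ w.darts, (d.toProd.2, d.toProd.1) ∉ O) →
        dipathOrder O (w.darts.map SimpleGraph.Dart.toProd) ≤ c) :
    ∃ lab : Sym2 V → ℝ, IsGoodLabeling G lab ∧ (lab '' G.edgeSet).ncard ≤ c := by
  classical
  have hlt : ∀ e, ∀ n ∈ ordSet (LineGraph G) O e, n < c := by
    rintro e n ⟨x, w, hw, hd, rfl⟩
    have := hc x e w hw hd
    unfold dipathOrder at this
    exact this
  have hbdd : ∀ e, BddAbove (ordSet (LineGraph G) O e) := fun e =>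
    ⟨c, fun n hn => (hlt e n hn).le⟩
  have hne : ∀ e, (ordSet (LineGraph G) O e).Nonempty := fun e =>
    ⟨0, e, Walk.nil, by simp, by simp, by simp⟩
  have hmem : ∀ e, sSup (ordSet (LineGraph G) O e) ∈ ordSet (LineGraph G) O e := fun e =>
    Nat.sSup_mem (hne e) (hbdd e)
  let lab : Sym2 V → ℝ := fun e =>
    if h : e ∈ G.edgeSet then ((sSup (ordSet (LineGraph G) O ⟨e, h⟩) : ℕ) : ℝ) else 0
  have hlab : ∀ e : G.edgeSet, lab e.val = ((sSup (ordSet (LineGraph G) O e) : ℕ) : ℝ) := by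
    intro e
    simp [lab]
  refine ⟨lab, good_of_orientation ?_ hgood, ?_⟩
  · intro e f hef
    rw [hlab, hlab, Nat.cast_lt]
    exact le_csSup (hbdd f) (ordSet_step hP hgood.1 hef (hmem e))
  · have hsub : lab '' G.edgeSet ⊆ ((Finset.range c).image (fun n : ℕ => (n : ℝ)) : Finset ℝ) := by
      rintro _ ⟨e, he, rfl⟩
      rw [hlab ⟨e, he⟩]
      simp only [Finset.coe_image, Set.mem_image, Finset.coe_range, Set.mem_Iio]
      exact ⟨_, hlt _ _ (hmem ⟨e, he⟩), rfl⟩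
    calc _ ≤ _ := Set.ncard_le_ncard hsub (Finset.finite_toSet _)
      _ ≤ c := by
        rw [Set.ncard_coe_finset]
        exact Finset.card_image_le.trans (by simp)

/-- Orientation induced by a labeling. -/
def orient (G : SimpleGraph V) (lab : Sym2 V → ℝ) : Set (G.edgeSet × G.edgeSet) :=
  {p | (LineGraph G).Adj p.1 p.2 ∧ lab p.1.val < lab p.2.val}

lemma mono_walk {α : Type*} {H : SimpleGraph α} (g : α → ℝ) {x y : α} (w : H.Walk x y)
    (h : ∀ d ∈ w.darts, g d.toProd.1 ≤ g d.toProd.2) :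
    g x ≤ g y ∧ (∀ v ∈ w.support, g x ≤ g v) ∧
      ∀ d ∈ w.darts, g x ≤ g d.toProd.1 ∧ g d.toProd.2 ≤ g y := by
  induction w with
  | nil => simp
  | cons hadj w ih =>
    simp only [Walk.darts_cons, List.mem_cons, forall_eq_or_imp] at h
    obtain ⟨h1, h2⟩ := h
    obtain ⟨i1, i2, i3⟩ := ih h2
    refine ⟨h1.trans i1, ?_, ?_⟩
    · intro v hv
      rw [Walk.support_cons, List.mem_cons] at hv
      rcases hv with rfl | hv
      · exact le_rfl
      · exact h1.trans (i2 v hv)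
    · intro d hd
      rw [Walk.darts_cons, List.mem_cons] at hd
      rcases hd with rfl | hd
      · exact ⟨le_rfl, i1⟩
      · exact ⟨h1.trans (i3 d hd).1, (i3 d hd).2⟩

open Classical in
lemma count_walk {α : Type*} {H : SimpleGraph α} (O : Set (α × α)) (g : α → ℝ)
    (hO : ∀ p ∈ O, g p.1 < g p.2) {x y : α} (w : H.Walk x y)
    (h : ∀ d ∈ w.darts, g d.toProd.1 ≤ g d.toProd.2) :
    (w.darts.map SimpleGraph.Dart.toProd).countP (fun p => decide (p ∈ O)) + 1 ≤
      (w.support.map g).toFinset.card := by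
  induction w with
  | nil => simp
  | @cons x z y hadj w ih =>
    have h' := h
    simp only [Walk.darts_cons, List.mem_cons, forall_eq_or_imp] at h
    obtain ⟨h1, h2⟩ := h
    have ih := ih h2
    obtain ⟨-, i2, -⟩ := mono_walk g w h2
    rw [Walk.darts_cons, List.map_cons, List.countP_cons, Walk.support_cons, List.map_cons,
      List.toFinset_cons]
    by_cases hm : (x, z) ∈ O
    · have hlt : g x < g z := hO _ hm
      rw [Finset.card_insert_of_notMem]
      · simp only [hm, decide_true, if_true]
        omega
      · simp only [List.mem_toFinset, List.mem_map, not_exists, not_and]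
        intro v hv hgv
        have := i2 v hv
        linarith
    · simp only [hm, decide_false]
      refine le_trans ?_ (Finset.card_le_card (Finset.subset_insert _ _))
      simpa using ih

lemma unimodal (l : ℕ → ℝ) (n : ℕ) (hn : 2 ≤ n)
    (h : ∀ i j k, i < j → j < k → k < n → l j < l i → l k ≤ l j) :
    ∃ m, m + 2 ≤ n ∧ (∀ i < m, l i ≤ l (i + 1)) ∧
      ∀ i, m + 1 ≤ i → i + 1 < n → l (i + 1) ≤ l i := by
  classical
  by_cases hex : ∃ i, i + 1 < n ∧ l (i + 1) < l i
  · obtain ⟨h1, h2⟩ := Nat.find_spec hex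
    have h3 := fun i (hi : i < Nat.find hex) => Nat.find_min hex hi
    generalize Nat.find hex = m at h1 h2 h3
    refine ⟨m, by omega, ?_, ?_⟩
    · intro i hi
      have := h3 i hi
      push Not at this
      exact this (by omega)
    · intro i hi hin
      have hlt : l i < l m := by
        rcases hi.eq_or_lt with rfl | hi'
        · exact h2
        · exact (h m (m + 1) i (by omega) hi' (by omega) h2).trans_lt h2
      exact h m i (i + 1) (by omega) (by omega) hin hlt
  · push Not at hex
    refine ⟨n - 2, by omega, ?_, ?_⟩
    · intro i hi
      exact hex i (by omega)
    · intro i h1 h2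
      omega

lemma mem_edges_iff {x y : V} {C : G.Walk x y} {e : Sym2 V} :
    e ∈ C.edges ↔ ∃ i < C.length, e = s(C.getVert i, C.getVert (i + 1)) := by
  rw [List.mem_iff_getElem]
  constructor
  · rintro ⟨i, hi, rfl⟩
    exact ⟨i, by simpa using hi, Walk.getElem_edges hi⟩
  · rintro ⟨i, hi, rfl⟩
    exact ⟨i, by simpa using hi, Walk.getElem_edges _⟩

/-- Two edges of a cycle meeting, one of which is not at the ends, are consecutive. -/
lemma cycle_adj {x : V} {C : G.Walk x x} (hC : C.IsCycle) {i j : ℕ} (hi : 0 < i)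
    (hi' : i + 1 < C.length) (hj : j < C.length) {v : V}
    (h1 : v ∈ s(C.getVert i, C.getVert (i + 1))) (h2 : v ∈ s(C.getVert j, C.getVert (j + 1))) :
    j = i ∨ j = i + 1 ∨ i = j + 1 := by
  have inj := hC.getVert_injOn
  have inj' := hC.getVert_injOn'
  have A : ∀ a b, 0 < a → a < C.length → b ≤ C.length → C.getVert a = C.getVert b → a = b := by
    intro a b ha ha' hb hab
    rcases Nat.eq_zero_or_pos b with rfl | hb'
    · exact inj' (by simp only [Set.mem_ofPred_eq]; omega) (by simp) hab
    · exact inj ⟨ha, by omega⟩ ⟨hb', hb⟩ hab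
  rw [Sym2.mem_iff] at h1 h2
  rcases h1 with rfl | rfl <;> rcases h2 with h | h
  · have := A _ _ hi (by omega) (by omega) h
    omega
  · have := A _ _ hi (by omega) (by omega) h
    omega
  · have := A _ _ (by omega) (by omega) (by omega) h
    omega
  · have := A _ _ (by omega) (by omega) (by omega) h
    omega

lemma twoSources_aux {lab : Sym2 V → ℝ} (hg : IsGoodLabeling G lab) {x : V} (C : G.Walk x x)
    (hC : C.IsCycle) (hmin : ∀ e ∈ C.edges, lab s(C.getVert 0, C.getVert 1) ≤ lab e) :
    TwoSourcesIn (LineGraph G) (orient G lab) {e : G.edgeSet | e.val ∈ C.edges} := by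
  classical
  by_contra hno
  have h3 := hC.three_le_length
  have hnd : C.edges.Nodup := hC.isTrail.edges_nodup
  set l : ℕ → ℝ := fun i => lab s(C.getVert i, C.getVert (i + 1)) with hl
  have hadj : ∀ i, i < C.length → G.Adj (C.getVert i) (C.getVert (i + 1)) :=
    fun i hi => C.adj_getVert_succ hi
  have hinj : ∀ i j, i < C.length → j < C.length →
      s(C.getVert i, C.getVert (i + 1)) = s(C.getVert j, C.getVert (j + 1)) → i = j := by
    intro i j hi hj h
    rw [← Walk.getElem_edges (p := C) (i := i) (by simpa using hi),
      ← Walk.getElem_edges (p := C) (i := j) (by simpa using hj)] at h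
    exact (hnd.getElem_inj_iff).1 h
  have hval : ∀ i j k, i < j → j < k → k < C.length → l j < l i → l k ≤ l j := by
    intro i j k hij hjk hk hji
    by_contra hkj
    push Not at hkj
    apply hno
    obtain ⟨t, ht, htmin⟩ := Finset.exists_min_image (Finset.Icc i k) l ⟨j, by simp; omega⟩
    have htj := htmin j (by simp; omega)
    have hti : t ≠ i := by
      rintro rfl
      exact absurd htj (not_le.2 hji)
    have htk : t ≠ k := by
      rintro rfl
      exact absurd htj (not_le.2 hkj)
    rw [Finset.mem_Icc] at ht
    refine ⟨{e | e.val ∈ C.edges ∧ lab e.val = l 0},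
      {e | ∃ s, i ≤ s ∧ s ≤ k ∧ e.val = s(C.getVert s, C.getVert (s + 1)) ∧ lab e.val = l t},
      ⟨⟨s(C.getVert 0, C.getVert 1), hadj 0 (by omega)⟩, mem_edges_iff.2 ⟨0, by omega, rfl⟩, rfl⟩,
      ⟨⟨s(C.getVert t, C.getVert (t + 1)), hadj t (by omega)⟩, t, ht.1, ht.2, rfl, rfl⟩,
      ?_, ⟨?_, ?_, ?_⟩, ⟨?_, ?_, ?_⟩⟩
    · intro heq
      have : (⟨s(C.getVert 0, C.getVert 1), hadj 0 (by omega)⟩ : G.edgeSet) ∈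
          {e : G.edgeSet | e.val ∈ C.edges ∧ lab e.val = l 0} :=
        ⟨mem_edges_iff.2 ⟨0, by omega, rfl⟩, rfl⟩
      rw [heq] at this
      obtain ⟨s, hs1, hs2, hs3, hs4⟩ := this
      have h0 := hinj 0 s (by omega) (by omega) hs3
      have : l 0 = l t := hs4
      have hi0 : i = 0 := by omega
      rw [hi0] at hji
      linarith
    · rintro e ⟨he, -⟩
      exact he
    · rintro u ⟨-, hu⟩ v ⟨-, hv⟩ -
      exact ⟨fun h => absurd h.2 (by simp [hu, hv]), fun h => absurd h.2 (by simp [hu, hv])⟩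
    · rintro u ⟨hu1, hu⟩ v hv hv' huv
      refine ⟨huv, lt_of_le_of_ne ?_ ?_⟩
      · simp only
        rw [hu]
        exact hmin _ hv
      · intro h
        exact hv' ⟨hv, h ▸ hu⟩
    · rintro e ⟨s, hs1, hs2, hs3, hs4⟩
      exact mem_edges_iff.2 ⟨s, by omega, hs3⟩
    · rintro u ⟨_, -, -, -, hu⟩ v ⟨_, -, -, -, hv⟩ -
      exact ⟨fun h => absurd h.2 (by simp [hu, hv]), fun h => absurd h.2 (by simp [hu, hv])⟩
    · rintro u ⟨s, hs1, hs2, hs3, hs4⟩ v hv hv' huv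
      obtain ⟨r, hr, hvr⟩ := mem_edges_iff.1 hv
      obtain ⟨-, z, hz1, hz2⟩ := lineGraph_adj.1 huv
      have hls : l s = l t := by rw [← hs4, hs3]
      have hsi : s ≠ i := by
        rintro rfl
        linarith
      have hsk : s ≠ k := by
        rintro rfl
        linarith
      have hcons := cycle_adj hC (i := s) (j := r) (by omega) (by omega) hr
        (hs3 ▸ hz1) (hvr ▸ hz2)
      have hri : i ≤ r ∧ r ≤ k := by omega
      refine ⟨huv, lt_of_le_of_ne ?_ ?_⟩
      · simp only
        rw [hs4, hvr]
        exact htmin r (by simpa using hri)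
      · intro h
        exact hv' ⟨r, hri.1, hri.2, hvr, h ▸ hs4⟩
  obtain ⟨m, hm, hup, hdown⟩ := unimodal l C.length (by omega) hval
  have hget : ∀ i (hi : i < C.edges.length), lab C.edges[i] = l i := by
    intro i hi
    rw [Walk.getElem_edges hi]
  have heq := hg _ _ (C.take (m + 1)) (C.drop (m + 1)).reverse (hC.isPath_take (by omega))
    (hC.isPath_drop (by omega)).reverse ?_ ?_
  · have h1 : C.edges[0]'(by simp; omega) ∈ (C.take (m + 1)).edges := by
      rw [Walk.edges_take]
      exact List.mem_iff_getElem.2 ⟨0, by simp; omega, by simp⟩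
    rw [heq, Walk.edges_reverse, List.mem_reverse, Walk.edges_drop] at h1
    obtain ⟨i, hi, hi'⟩ := List.mem_iff_getElem.1 h1
    rw [List.getElem_drop] at hi'
    have := (hnd.getElem_inj_iff).1 hi'
    omega
  · rw [increasing_iff, Walk.edges_take, List.isChain_iff_getElem]
    intro i hi
    simp only [List.length_map, List.length_take, Walk.length_edges] at hi
    simp only [List.getElem_map, List.getElem_take, hget]
    exact hup i (by omega)
  · rw [increasing_iff, Walk.edges_reverse, Walk.edges_drop, List.map_reverse,
      List.isChain_reverse, List.isChain_iff_getElem]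
    intro i hi
    simp only [List.length_map, List.length_drop, Walk.length_edges] at hi
    simp only [List.getElem_map, List.getElem_drop, hget]
    exact hdown (m + 1 + i) (by omega) (by omega)

lemma twoSources {lab : Sym2 V → ℝ} (hg : IsGoodLabeling G lab) {x : V} (C : G.Walk x x)
    (hC : C.IsCycle) :
    TwoSourcesIn (LineGraph G) (orient G lab) {e : G.edgeSet | e.val ∈ C.edges} := by
  classical
  have h3 := hC.three_le_length
  obtain ⟨i, hi, himin⟩ := Finset.exists_min_image (Finset.range C.length)
    (fun i => lab s(C.getVert i, C.getVert (i + 1))) ⟨0, by simp; omega⟩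
  rw [Finset.mem_range] at hi
  have hspec := C.append_take_drop_eq i
  have hedges : ∀ e, e ∈ ((C.drop i).append (C.take i)).edges ↔ e ∈ C.edges := by
    intro e
    conv_rhs => rw [← hspec]
    rw [Walk.edges_append, Walk.edges_append, List.mem_append, List.mem_append, or_comm]
  have hcyc : ((C.drop i).append (C.take i)).IsCycle := by
    rw [← hspec] at hC
    rw [Walk.isCycle_def] at hC ⊢
    obtain ⟨c1, c2, c3⟩ := hC
    refine ⟨?_, ?_, ?_⟩
    · rw [Walk.isTrail_def, Walk.edges_append] at *
      exact List.nodup_append_comm.1 c1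
    · intro h
      have := congrArg Walk.length h
      simp at this
      omega
    · rw [Walk.tail_support_append] at *
      exact List.nodup_append_comm.1 c3
  have hset : {e : G.edgeSet | e.val ∈ C.edges} =
      {e : G.edgeSet | e.val ∈ ((C.drop i).append (C.take i)).edges} := by
    ext e
    exact (hedges _).symm
  rw [hset]
  apply twoSources_aux hg _ hcyc
  intro e he
  obtain ⟨j, hj, rfl⟩ := mem_edges_iff.1 ((hedges e).1 he)
  have h1 : ((C.drop i).append (C.take i)).getVert 1 = C.getVert (i + 1) := by
    rw [Walk.getVert_append]
    simp only [Walk.drop_length, Walk.drop_getVert]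
    split_ifs with h
    · rfl
    · have : i + 1 = C.length := by omega
      rw [this]
      have h' : 1 - (C.length - i) = 0 := by omega
      simp [h']
  rw [h1, Walk.getVert_zero]
  exact himin j (by simpa using hj)

lemma forward [Finite V] {c : ℕ} (lab : Sym2 V → ℝ) (hg : IsGoodLabeling G lab)
    (hc : (lab '' G.edgeSet).ncard ≤ c) :
    IsPartialOrientation (LineGraph G) (orient G lab) ∧ IsGoodPO G (orient G lab) ∧
      ∀ (x y : ↥G.edgeSet) (w : (LineGraph G).Walk x y), w.IsPath →
        (∀ d ∈ w.darts, (d.toProd.2, d.toProd.1) ∉ orient G lab) →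
        dipathOrder (orient G lab) (w.darts.map SimpleGraph.Dart.toProd) ≤ c := by
  classical
  have hle : ∀ d : (LineGraph G).Dart, (d.toProd.2, d.toProd.1) ∉ orient G lab →
      lab d.toProd.1.val ≤ lab d.toProd.2.val := by
    intro d hd
    by_contra h
    exact hd ⟨d.adj.symm, not_le.1 h⟩
  refine ⟨fun p hp => ⟨hp.1, fun h => lt_asymm hp.2 h.2⟩, ⟨?_, ?_⟩, ?_⟩
  · rintro ⟨a, q, -, hd, d, hdm, hdO⟩
    have h1 := mono_walk (fun e : G.edgeSet => lab e.val) q (fun d hd' => hle d (hd d hd'))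
    have h2 := h1.2.2 d hdm
    have h4 : lab d.toProd.1.val < lab d.toProd.2.val := hdO.2
    linarith [h2.1, h2.2]
  · intro v C hC
    exact Or.inl (twoSources hg C hC)
  · intro x y w _ hd
    have h1 := count_walk (orient G lab) (fun e : G.edgeSet => lab e.val) (fun p hp => hp.2) w
      (fun d hd' => hle d (hd d hd'))
    unfold dipathOrder
    refine h1.trans (le_trans ?_ hc)
    rw [← Set.ncard_coe_finset]
    apply Set.ncard_le_ncard
    · intro r hr
      simp only [List.coe_toFinset, List.mem_map, Set.mem_ofPred_eq] at hr
      obtain ⟨e, -, rfl⟩ := hr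
      exact ⟨e.val, e.2, rfl⟩
    · exact Set.toFinite _

end CGel

/-- A graph `G` admits a `c`-gel (a good edge-labeling with at most `c` distinct values) if
and only if its line graph admits a good partial orientation all of whose partial dipaths
(paths each of whose edges is unoriented or oriented forwards) have order at most `c`. -/
theorem cgel_iff_good_partial_orientation {V : Type*} [Fintype V] (G : SimpleGraph V)
    (c : ℕ) :
    (∃ lab : Sym2 V → ℝ, IsGoodLabeling G lab ∧ (lab '' G.edgeSet).ncard ≤ c) ↔
    (∃ O : Set (↥G.edgeSet × ↥G.edgeSet),
      IsPartialOrientation (LineGraph G) O ∧ IsGoodPO G O ∧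
      ∀ (x y : ↥G.edgeSet) (w : (LineGraph G).Walk x y), w.IsPath →
        (∀ d ∈ w.darts, (d.toProd.2, d.toProd.1) ∉ O) →
        dipathOrder O (w.darts.map SimpleGraph.Dart.toProd) ≤ c) := by
  constructor
  · rintro ⟨lab, hg, hc⟩
    exact ⟨CGel.orient G lab, CGel.forward lab hg hc⟩
  · rintro ⟨O, hP, hgood, hc⟩
    exact CGel.backward O hP hgood hc
end
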